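/- First Sampling Lemma: let k be a positive integer and let G and H be edge-weighted graphs on the same vertex set V with |V| ≥ k and all edge weights in [0,1]. If S is chosen uniformly at random from all k-element subsets of V, then with probability at least 1 − 2e^{−√k/8}, | d_□(G[S], H[S]) − d_□(G,H) | ≤ 10/k^{1/4}, where G[S] and H[S] denote the weighted subgraphs induced on S. -/

import Mathlib

open Finset
open scoped Classical

-- The weight function of a simple graph: 1 on edges, 0 elsewhere.
noncomputable def adjW {V : Type} (G : SimpleGraph V) : V → V → ℝ :=
  fun u v => if G.Adj u v then 1 else 0

-- The normalized cut distance `d_□` between two edge-weighted graphs on the same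
-- finite vertex set `V`:  `(1/|V|²) · max_{S,T ⊆ V} |e_β(S,T) − e_β'(S,T)|`.
noncomputable def cutDistW {V : Type} [Fintype V] (β β' : V → V → ℝ) : ℝ :=
  (⨆ p : Finset V × Finset V, |∑ s ∈ p.1, ∑ t ∈ p.2, (β s t - β' s t)|) /
    ((Fintype.card V : ℝ) ^ 2)

-- The class of `v` under the partition of `V` given by the colouring `c : V → Fin k`.
noncomputable def classOf {V : Type} [Fintype V] {k : ℕ} (c : V → Fin k) (i : Fin k) :
    Finset V :=
  Finset.univ.filter (fun v => c v = i)

-- The quotient weighted graph `G_P` of `G` by the partition given by `c : V → Fin k`: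
-- the weight of the pair `uv` is the edge density between the classes of `u` and `v`.
noncomputable def quotientW {V : Type} [Fintype V] {k : ℕ} (G : SimpleGraph V)
    (c : V → Fin k) : V → V → ℝ :=
  fun u v =>
    (∑ x ∈ classOf c (c u), ∑ y ∈ classOf c (c v), adjW G x y) /
      (((classOf c (c u)).card : ℝ) * ((classOf c (c v)).card : ℝ))

/-!
Write `U` for the difference of the two weight functions, so that the cut distance of the graphs
induced on `S` is the normalized cut norm of `U` on `S × S`.

*Mean.* If `k / 2` rows are sampled independently, symmetrization and contraction for `x ↦ x⁺`
reduce the expected increase of the normalized cut norm to the size of Rademacher sums of single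
columns, which is `O(1 / √k)`; the same applies to columns. A random `k`-set `S` is compared with
such a sample by realizing `S` as `π(K)` for a random permutation `π` and a `k`-set `K` containing
all sampled points: given `S`, each off-diagonal pair of sampled points is a uniform pair of
distinct points of `S`, so an extremal rectangle for `S` is seen by the sample up to the `O(1 / k)`
contribution of the diagonal. The same comparison with `K = V` bounds the mean from below.

*Concentration.* Exchanging one point of `S` changes the normalized cut norm by at most `2 / k`.
Drawing the points of `S` one at a time, Hoeffding's lemma at each step bounds the exponential
moment, and deviation `1 / k ^ (1 / 4)` gives the exponent `-√k / 8`.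
-/

open scoped BigOperators

section Signs

lemma expect_units_int (f : ℤˣ → ℝ) : 𝔼 ε, f ε = (f 1 + f (-1)) / 2 := by
  rw [Fintype.expect_eq_sum_div_card]
  simp

lemma abs_units_int (ε : ℤˣ) : |((ε : ℤ) : ℝ)| = 1 := by
  rcases Int.units_eq_one_or ε with rfl | rfl <;> simp

lemma exists_units_int_mul_eq_abs (x : ℝ) : ∃ ε : ℤˣ, ((ε : ℤ) : ℝ) * x = |x| := by
  rcases abs_choice x with h | h
  · exact ⟨1, by simp [h]⟩
  · exact ⟨-1, by simp [h]⟩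

end Signs

section CutNorm

variable {α β ι κ : Type*} {U : α → β → ℝ} {S : Finset α} {T : Finset β}

/-- The cut norm `max |∑ s ∈ A, ∑ t ∈ B, U s t|`, over `A ⊆ S` and `B ⊆ T`, of the submatrix of `U`
with rows `S` and columns `T`, without normalization. -/
noncomputable def cutNorm (U : α → β → ℝ) (S : Finset α) (T : Finset β) : ℝ :=
  (S.powerset ×ˢ T.powerset).sup' ⟨(∅, ∅), by simp⟩ fun p ↦ |∑ s ∈ p.1, ∑ t ∈ p.2, U s t|

/-- The cut norm of the submatrix of `U` with rows `S` and columns `T` divided by its number of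
entries. For the difference `U` of two weight functions and `S = T` this is the cut distance of the
two induced graphs. -/
noncomputable def cutDensity (U : α → β → ℝ) (S : Finset α) (T : Finset β) : ℝ :=
  cutNorm U S T / (#S * #T)

lemma abs_sum_le_cutNorm (U : α → β → ℝ) {A : Finset α} {B : Finset β} (hA : A ⊆ S) (hB : B ⊆ T) :
    |∑ s ∈ A, ∑ t ∈ B, U s t| ≤ cutNorm U S T :=
  le_sup' (fun p : Finset α × Finset β ↦ |∑ s ∈ p.1, ∑ t ∈ p.2, U s t|)
    (mk_mem_product (mem_powerset.2 hA) (mem_powerset.2 hB))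

lemma cutNorm_le {C : ℝ} (h : ∀ A ⊆ S, ∀ B ⊆ T, |∑ s ∈ A, ∑ t ∈ B, U s t| ≤ C) :
    cutNorm U S T ≤ C :=
  sup'_le _ _ fun _ hp ↦ h _ (mem_powerset.1 (mem_product.1 hp).1) _
    (mem_powerset.1 (mem_product.1 hp).2)

lemma cutNorm_nonneg (U : α → β → ℝ) (S : Finset α) (T : Finset β) : 0 ≤ cutNorm U S T := by
  simpa using abs_sum_le_cutNorm U (empty_subset S) (empty_subset T)

lemma cutNorm_mono {S' : Finset α} {T' : Finset β} (hS : S ⊆ S') (hT : T ⊆ T') :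
    cutNorm U S T ≤ cutNorm U S' T' :=
  cutNorm_le fun _ hA _ hB ↦ abs_sum_le_cutNorm U (hA.trans hS) (hB.trans hT)

lemma abs_sum_sum_le_card_mul_card (hU : ∀ s t, |U s t| ≤ 1) (S : Finset α) (T : Finset β) :
    |∑ s ∈ S, ∑ t ∈ T, U s t| ≤ #S * #T := by
  rw [← sum_product']
  calc |∑ p ∈ S ×ˢ T, U p.1 p.2| ≤ ∑ p ∈ S ×ˢ T, |U p.1 p.2| := abs_sum_le_sum_abs _ _
    _ ≤ ∑ _p ∈ S ×ˢ T, (1 : ℝ) := sum_le_sum fun p _ ↦ hU p.1 p.2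
    _ = #S * #T := by simp

lemma cutNorm_le_card_mul_card (hU : ∀ s t, |U s t| ≤ 1) (S : Finset α) (T : Finset β) :
    cutNorm U S T ≤ #S * #T := by
  refine cutNorm_le fun A hA B hB ↦ (abs_sum_sum_le_card_mul_card hU A B).trans ?_
  gcongr

lemma cutNorm_swap (U : α → β → ℝ) (S : Finset α) (T : Finset β) :
    cutNorm (fun t s ↦ U s t) T S = cutNorm U S T := by
  apply le_antisymm <;> refine cutNorm_le fun A hA B hB ↦ ?_ <;> rw [sum_comm] <;>
    exact abs_sum_le_cutNorm _ hB hA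

lemma cutNorm_map (U : α → β → ℝ) (f : ι ↪ α) (g : κ ↪ β) (I : Finset ι) (J : Finset κ) :
    cutNorm U (I.map f) (J.map g) = cutNorm (fun i j ↦ U (f i) (g j)) I J := by
  apply le_antisymm <;> refine cutNorm_le fun A hA B hB ↦ ?_
  · obtain ⟨A', hA', rfl⟩ := subset_map_iff.1 hA
    obtain ⟨B', hB', rfl⟩ := subset_map_iff.1 hB
    simpa only [sum_map] using abs_sum_le_cutNorm (fun i j ↦ U (f i) (g j)) hA' hB'
  · simpa only [sum_map] using
      abs_sum_le_cutNorm U (map_subset_map (f := f).2 hA) (map_subset_map (f := g).2 hB)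

lemma exists_cutNorm_eq [DecidableEq α] [DecidableEq β] (U : α → β → ℝ) (S : Finset α)
    (T : Finset β) :
    ∃ p : Finset α × Finset β × ℤˣ, cutNorm U S T =
      ∑ s ∈ S, ∑ t ∈ T, if s ∈ p.1 ∧ t ∈ p.2.1 then ((p.2.2 : ℤ) : ℝ) * U s t else 0 := by
  obtain ⟨⟨A, B⟩, hAB, heq⟩ := exists_mem_eq_sup' (s := S.powerset ×ˢ T.powerset) ⟨(∅, ∅), by simp⟩
    fun p ↦ |∑ s ∈ p.1, ∑ t ∈ p.2, U s t|
  obtain ⟨ε, hε⟩ := exists_units_int_mul_eq_abs (∑ s ∈ A, ∑ t ∈ B, U s t)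
  simp only [mem_product, mem_powerset] at hAB
  refine ⟨(A, B, ε), heq.trans ?_⟩
  simp only [← hε, mul_sum, ite_and, sum_ite_irrel, sum_const_zero, sum_ite_mem,
    inter_eq_right.2 hAB.1, inter_eq_right.2 hAB.2]

lemma sum_ite_le_cutNorm (U : α → β → ℝ) (S : Finset α) (T : Finset β) (p : α → Prop) (q : β → Prop)
    [DecidablePred p] [DecidablePred q] (ε : ℤˣ) :
    (∑ s ∈ S, ∑ t ∈ T, if p s ∧ q t then ((ε : ℤ) : ℝ) * U s t else 0) ≤ cutNorm U S T :=
  calc (∑ s ∈ S, ∑ t ∈ T, if p s ∧ q t then ((ε : ℤ) : ℝ) * U s t else 0)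
      = ((ε : ℤ) : ℝ) * ∑ s ∈ S with p s, ∑ t ∈ T with q t, U s t := by
        simp only [mul_sum, ite_and, sum_ite_irrel, sum_const_zero, sum_filter, mul_ite, mul_zero]
    _ ≤ |∑ s ∈ S with p s, ∑ t ∈ T with q t, U s t| := by
        simpa only [abs_mul, abs_units_int, one_mul] using
          le_abs_self (((ε : ℤ) : ℝ) * ∑ s ∈ S with p s, ∑ t ∈ T with q t, U s t)
    _ ≤ cutNorm U S T := abs_sum_le_cutNorm U (filter_subset _ _) (filter_subset _ _)

lemma cutNorm_univ_eq_iSup [Fintype α] [Fintype β] (U : α → β → ℝ) :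
    cutNorm U univ univ = ⨆ t : ℤˣ × Finset β, ∑ v, (((t.1 : ℤ) : ℝ) * ∑ p ∈ t.2, U v p)⁺ := by
  apply le_antisymm
  · refine cutNorm_le fun A _ B _ ↦ ?_
    obtain ⟨ε, hε⟩ := exists_units_int_mul_eq_abs (∑ v ∈ A, ∑ p ∈ B, U v p)
    calc |∑ v ∈ A, ∑ p ∈ B, U v p| = ∑ v ∈ A, ((ε : ℤ) : ℝ) * ∑ p ∈ B, U v p := by
          rw [← hε, mul_sum]
      _ ≤ ∑ v ∈ A, (((ε : ℤ) : ℝ) * ∑ p ∈ B, U v p)⁺ := sum_le_sum fun v _ ↦ le_posPart _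
      _ ≤ ∑ v, (((ε : ℤ) : ℝ) * ∑ p ∈ B, U v p)⁺ :=
          sum_le_univ_sum_of_nonneg fun v ↦ posPart_nonneg _
      _ ≤ _ := le_ciSup (f := fun t : ℤˣ × Finset β ↦
          ∑ v, (((t.1 : ℤ) : ℝ) * ∑ p ∈ t.2, U v p)⁺) (Set.finite_range _).bddAbove (ε, B)
  · refine ciSup_le fun ⟨ε, B⟩ ↦ ?_
    calc ∑ v, (((ε : ℤ) : ℝ) * ∑ p ∈ B, U v p)⁺
        = ∑ v, ∑ p, if 0 < ((ε : ℤ) : ℝ) * ∑ p ∈ B, U v p ∧ p ∈ B then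
            ((ε : ℤ) : ℝ) * U v p else 0 := by
          simp only [ite_and, sum_ite_irrel, sum_const_zero, sum_ite_mem, univ_inter, ← mul_sum,
            posPart_eq_ite_lt]
      _ ≤ cutNorm U univ univ := sum_ite_le_cutNorm U univ univ _ _ ε

lemma cutNorm_insert_left_le [DecidableEq α] (hU : ∀ s t, |U s t| ≤ 1) (x : α) (S : Finset α)
    (T : Finset β) : cutNorm U (insert x S) T ≤ cutNorm U S T + #T := by
  refine cutNorm_le fun A hA B hB ↦ ?_
  by_cases hx : x ∈ A
  · have hrow : |∑ t ∈ B, U x t| ≤ #T :=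
      calc |∑ t ∈ B, U x t| ≤ #B := by simpa using abs_sum_sum_le_card_mul_card hU {x} B
        _ ≤ #T := mod_cast card_le_card hB
    rw [← sum_erase_add _ _ hx]
    exact (abs_add_le _ _).trans
      (add_le_add (abs_sum_le_cutNorm U (subset_insert_iff.1 hA) hB) hrow)
  · exact (abs_sum_le_cutNorm U ((subset_insert_iff_of_notMem hx).1 hA) hB).trans
      (le_add_of_nonneg_right (Nat.cast_nonneg _))

lemma cutNorm_insert_insert_le [DecidableEq α] {U : α → α → ℝ} (hU : ∀ s t, |U s t| ≤ 1) (x : α)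
    (T : Finset α) : cutNorm U (insert x T) (insert x T) ≤ cutNorm U T T + (2 * #T + 1) :=
  calc cutNorm U (insert x T) (insert x T)
      ≤ cutNorm U T (insert x T) + #(insert x T) := cutNorm_insert_left_le hU x T _
    _ = cutNorm (fun t s ↦ U s t) (insert x T) T + #(insert x T) := by rw [cutNorm_swap]
    _ ≤ cutNorm (fun t s ↦ U s t) T T + #T + (#T + 1) := by
        gcongr
        · exact cutNorm_insert_left_le (fun s t ↦ hU t s) x T T
        · exact_mod_cast card_insert_le x T
    _ = cutNorm U T T + (2 * #T + 1) := by rw [cutNorm_swap]; ring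

lemma cutNorm_insert_sub_le [DecidableEq α] {U : α → α → ℝ} (hU : ∀ s t, |U s t| ≤ 1) (x y : α)
    (T : Finset α) :
    cutNorm U (insert x T) (insert x T) - cutNorm U (insert y T) (insert y T) ≤ 2 * #T + 1 := by
  linarith [cutNorm_insert_insert_le hU x T,
    cutNorm_mono (U := U) (subset_insert y T) (subset_insert y T)]

lemma cutDensity_nonneg (U : α → β → ℝ) (S : Finset α) (T : Finset β) : 0 ≤ cutDensity U S T :=
  div_nonneg (cutNorm_nonneg U S T) (by positivity)

lemma cutDensity_le_one (hU : ∀ s t, |U s t| ≤ 1) (S : Finset α) (T : Finset β) :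
    cutDensity U S T ≤ 1 :=
  div_le_one_of_le₀ (cutNorm_le_card_mul_card hU S T) (by positivity)

lemma cutDensity_swap (U : α → β → ℝ) (S : Finset α) (T : Finset β) :
    cutDensity (fun t s ↦ U s t) T S = cutDensity U S T := by
  rw [cutDensity, cutDensity, cutNorm_swap, mul_comm]

lemma cutDensity_map (U : α → β → ℝ) (f : ι ↪ α) (g : κ ↪ β) (I : Finset ι) (J : Finset κ) :
    cutDensity U (I.map f) (J.map g) = cutDensity (fun i j ↦ U (f i) (g j)) I J := by
  rw [cutDensity, cutDensity, cutNorm_map, card_map, card_map]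

lemma exists_cutDensity_eq [DecidableEq α] [DecidableEq β] (U : α → β → ℝ) (S : Finset α)
    (T : Finset β) :
    ∃ p : Finset α × Finset β × ℤˣ, cutDensity U S T =
      𝔼 s ∈ S, 𝔼 t ∈ T, if s ∈ p.1 ∧ t ∈ p.2.1 then ((p.2.2 : ℤ) : ℝ) * U s t else 0 := by
  obtain ⟨p, hp⟩ := exists_cutNorm_eq U S T
  refine ⟨p, ?_⟩
  simp only [expect_eq_sum_div_card, ← sum_div, div_div, cutDensity, hp]
  rw [mul_comm]

lemma expect_ite_le_cutDensity (U : α → β → ℝ) (S : Finset α) (T : Finset β) (p : α → Prop)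
    (q : β → Prop) [DecidablePred p] [DecidablePred q] (ε : ℤˣ) :
    (𝔼 s ∈ S, 𝔼 t ∈ T, if p s ∧ q t then ((ε : ℤ) : ℝ) * U s t else 0) ≤ cutDensity U S T := by
  simp only [expect_eq_sum_div_card, ← sum_div, div_div, cutDensity]
  rw [mul_comm]
  gcongr
  exact sum_ite_le_cutNorm U S T p q ε

end CutNorm


section Symmetrization

variable {Ω Ω₁ Ω₂ T V : Type*} [Fintype Ω] [Fintype Ω₁] [Fintype Ω₂] [Fintype V]

lemma expect_fin_succ {m : ℕ} (F : (Fin (m + 1) → Ω) → ℝ) :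
    𝔼 φ, F φ = 𝔼 ω, 𝔼 φ : Fin m → Ω, F (Fin.cons ω φ) := by
  rw [← expect_product', univ_product_univ]
  exact (Fintype.expect_equiv (Fin.consEquiv fun _ ↦ Ω) _ _ fun _ ↦ rfl).symm

lemma expect_iSup_add_sum_le {g : Ω₁ → T → ℝ} {h : Ω₂ → T → ℝ}
    (hgh : ∀ a : T → ℝ, 𝔼 ω, (⨆ t, (a t + g ω t)) ≤ 𝔼 ω, (⨆ t, (a t + h ω t)))
    (m : ℕ) (a : T → ℝ) :
    𝔼 φ : Fin m → Ω₁, (⨆ t, (a t + ∑ i, g (φ i) t)) ≤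
      𝔼 φ : Fin m → Ω₂, (⨆ t, (a t + ∑ i, h (φ i) t)) := by
  induction m generalizing a with
  | zero => simp
  | succ m ih =>
    simp only [expect_fin_succ, Fin.sum_univ_succ, Fin.cons_zero, Fin.cons_succ, ← add_assoc]
    calc 𝔼 ω, 𝔼 φ : Fin m → Ω₁, (⨆ t, (a t + g ω t + ∑ i, g (φ i) t))
        ≤ 𝔼 ω, 𝔼 φ : Fin m → Ω₂, (⨆ t, (a t + g ω t + ∑ i, h (φ i) t)) :=
          expect_le_expect fun ω _ ↦ ih fun t ↦ a t + g ω t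
      _ = 𝔼 φ : Fin m → Ω₂, 𝔼 ω, (⨆ t, (a t + ∑ i, h (φ i) t + g ω t)) := by
          rw [expect_comm]
          simp only [add_right_comm]
      _ ≤ 𝔼 φ : Fin m → Ω₂, 𝔼 ω, (⨆ t, (a t + ∑ i, h (φ i) t + h ω t)) :=
          expect_le_expect fun φ _ ↦ hgh fun t ↦ a t + ∑ i, h (φ i) t
      _ = 𝔼 ω, 𝔼 φ : Fin m → Ω₂, (⨆ t, (a t + h ω t + ∑ i, h (φ i) t)) := by
          rw [expect_comm]
          simp only [add_right_comm]

variable [Finite T]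

lemma le_iSup_of_finite (f : T → ℝ) (t : T) : f t ≤ ⨆ t, f t :=
  le_ciSup (Set.finite_range f).bddAbove t

-- Contraction principle for the 1-Lipschitz map `x ↦ x⁺`, for a single Rademacher sign.
lemma iSup_add_posPart_add_iSup_sub_posPart_le [Nonempty T] (a b : T → ℝ) :
    (⨆ t, (a t + (b t)⁺)) + (⨆ t, (a t - (b t)⁺)) ≤ (⨆ t, (a t + b t)) + ⨆ t, (a t - b t) := by
  obtain ⟨t, ht⟩ := exists_eq_ciSup_of_finite (f := fun t ↦ a t + (b t)⁺)
  obtain ⟨s, hs⟩ := exists_eq_ciSup_of_finite (f := fun t ↦ a t - (b t)⁺)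
  rw [← ht, ← hs]
  have hadd := le_iSup_of_finite fun t ↦ a t + b t
  have hsub := le_iSup_of_finite fun t ↦ a t - b t
  rcases max_cases (b t) 0 with hbt | hbt <;> rcases max_cases (b s) 0 with hbs | hbs <;>
    linarith [hadd t, hadd s, hsub t, hsub s, posPart_def (b t), posPart_def (b s)]

lemma expect_iSup_add_sub_expect_le [Nonempty V] [Nonempty T] (g : V → T → ℝ) (a : T → ℝ) :
    𝔼 v, (⨆ t, (a t + (g v t - 𝔼 w, g w t))) ≤
      𝔼 v, ((⨆ t, (a t + 2 * g v t)) + ⨆ t, (a t - 2 * g v t)) / 2 :=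
  calc 𝔼 v, (⨆ t, (a t + (g v t - 𝔼 w, g w t)))
      ≤ 𝔼 v, 𝔼 w, ((⨆ t, (a t + 2 * g v t)) + ⨆ t, (a t - 2 * g w t)) / 2 := by
        refine expect_le_expect fun v _ ↦ ciSup_le fun t ↦ ?_
        rw [← Fintype.expect_const (ι := V) (a t), ← Fintype.expect_const (ι := V) (g v t),
          ← expect_sub_distrib, ← expect_add_distrib]
        refine expect_le_expect fun w _ ↦ ?_
        linarith [le_iSup_of_finite (fun t ↦ a t + 2 * g v t) t,
          le_iSup_of_finite (fun t ↦ a t - 2 * g w t) t]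
    _ = 𝔼 v, ((⨆ t, (a t + 2 * g v t)) + ⨆ t, (a t - 2 * g v t)) / 2 := by
        simp only [← expect_div, expect_add_distrib, Fintype.expect_const]

lemma expect_iSup_add_posPart_sub_expect_le [Nonempty V] [Nonempty T] (b : V → T → ℝ)
    (a : T → ℝ) :
    𝔼 v, (⨆ t, (a t + ((b v t)⁺ - 𝔼 w, (b w t)⁺))) ≤
      𝔼 ω : V × ℤˣ, ⨆ t, (a t + 2 * (((ω.2 : ℤ) : ℝ) * b ω.1 t)) := by
  have two_mul_posPart (x : ℝ) : 2 * x⁺ = (2 * x)⁺ := by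
    simp [posPart_def, mul_max_of_nonneg]
  calc 𝔼 v, (⨆ t, (a t + ((b v t)⁺ - 𝔼 w, (b w t)⁺)))
      ≤ 𝔼 v, ((⨆ t, (a t + (2 * b v t)⁺)) + ⨆ t, (a t - (2 * b v t)⁺)) / 2 := by
        simpa only [two_mul_posPart] using expect_iSup_add_sub_expect_le (fun v t ↦ (b v t)⁺) a
    _ ≤ 𝔼 v, ((⨆ t, (a t + 2 * b v t)) + ⨆ t, (a t - 2 * b v t)) / 2 :=
        expect_le_expect fun v _ ↦ div_le_div_of_nonneg_right
          (iSup_add_posPart_add_iSup_sub_posPart_le a fun t ↦ 2 * b v t) zero_le_two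
    _ = 𝔼 ω : V × ℤˣ, ⨆ t, (a t + 2 * (((ω.2 : ℤ) : ℝ) * b ω.1 t)) := by
        rw [← univ_product_univ, expect_product]
        simp only [expect_units_int, Units.val_one, Units.val_neg, Int.cast_one, Int.cast_neg,
          one_mul, neg_mul, mul_neg, sub_eq_add_neg]

lemma expect_iSup_sum_posPart_le [Nonempty V] [Nonempty T] (b : V → T → ℝ) {C : ℝ}
    (hC : ∀ t, 𝔼 v, (b v t)⁺ ≤ C) (m : ℕ) :
    𝔼 φ : Fin m → V, (⨆ t, ∑ i, (b (φ i) t)⁺) ≤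
      m * C + 2 * 𝔼 ω : Fin m → V × ℤˣ, ⨆ t, ∑ i, (((ω i).2 : ℤ) : ℝ) * b (ω i).1 t := by
  calc 𝔼 φ : Fin m → V, (⨆ t, ∑ i, (b (φ i) t)⁺)
      ≤ 𝔼 φ : Fin m → V, (m * C + ⨆ t, (0 + ∑ i, ((b (φ i) t)⁺ - 𝔼 v, (b v t)⁺))) := by
        refine expect_le_expect fun φ _ ↦ ciSup_le fun t ↦ ?_
        have hsup := le_iSup_of_finite (fun t ↦ 0 + ∑ i, ((b (φ i) t)⁺ - 𝔼 v, (b v t)⁺)) t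
        have hmean := mul_le_mul_of_nonneg_left (hC t) (Nat.cast_nonneg (α := ℝ) m)
        simp only [sum_sub_distrib, sum_const, card_univ, Fintype.card_fin, nsmul_eq_mul]
          at hsup ⊢
        linarith
    _ = m * C + 𝔼 φ : Fin m → V, ⨆ t, (0 + ∑ i, ((b (φ i) t)⁺ - 𝔼 v, (b v t)⁺)) := by
        rw [expect_add_distrib, Fintype.expect_const]
    _ ≤ m * C + 𝔼 ω : Fin m → V × ℤˣ,
          ⨆ t, (0 + ∑ i, 2 * ((((ω i).2 : ℤ) : ℝ) * b (ω i).1 t)) :=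
        add_le_add_right (expect_iSup_add_sum_le (expect_iSup_add_posPart_sub_expect_le b) m 0) _
    _ = m * C + 2 * 𝔼 ω : Fin m → V × ℤˣ, ⨆ t, ∑ i, (((ω i).2 : ℤ) : ℝ) * b (ω i).1 t := by
        simp only [zero_add, ← mul_sum, ← Real.mul_iSup_of_nonneg zero_le_two, mul_expect]

lemma expect_add_sum_sq_le [Nonempty Ω] {x : Ω → ℝ} (hmean : 𝔼 ω, x ω = 0)
    (hbound : ∀ ω, |x ω| ≤ 1) (m : ℕ) (a : ℝ) :
    𝔼 φ : Fin m → Ω, (a + ∑ i, x (φ i)) ^ 2 ≤ a ^ 2 + m := by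
  induction m generalizing a with
  | zero => simp
  | succ m ih =>
    simp only [expect_fin_succ, Fin.sum_univ_succ, Fin.cons_zero, Fin.cons_succ, ← add_assoc]
    calc 𝔼 ω, 𝔼 φ : Fin m → Ω, (a + x ω + ∑ i, x (φ i)) ^ 2
        ≤ 𝔼 ω, ((a + x ω) ^ 2 + m) := expect_le_expect fun ω _ ↦ ih _
      _ ≤ 𝔼 ω, (a ^ 2 + 1 + m + 2 * a * x ω) := by
          refine expect_le_expect fun ω _ ↦ ?_
          linarith [(sq_le_one_iff_abs_le_one (x ω)).2 (hbound ω)]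
      _ = a ^ 2 + (m + 1 : ℕ) := by
          rw [expect_add_distrib, ← mul_expect, hmean, Fintype.expect_const]
          push_cast
          ring

lemma expect_abs_sum_le_sqrt [Nonempty Ω] {x : Ω → ℝ} (hmean : 𝔼 ω, x ω = 0)
    (hbound : ∀ ω, |x ω| ≤ 1) (m : ℕ) : 𝔼 φ : Fin m → Ω, |∑ i, x (φ i)| ≤ √m := by
  refine Real.le_sqrt_of_sq_le ?_
  have hsq := expect_add_sum_sq_le hmean hbound m 0
  have hCS := expect_mul_sq_le_sq_mul_sq univ (fun φ : Fin m → Ω ↦ |∑ i, x (φ i)|) 1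
  simp only [Pi.one_apply, mul_one, one_pow, sq_abs, Fintype.expect_const] at hCS
  simpa using hCS.trans (by simpa using hsq)

end Symmetrization

section RowSampling

variable {V W : Type*} [Fintype V] [Fintype W] [Nonempty V] [Nonempty W] {U : V → W → ℝ}

lemma expect_iSup_rademacher_le (hU : ∀ v w, |U v w| ≤ 1) (m : ℕ) :
    𝔼 ω : Fin m → V × ℤˣ, (⨆ t : ℤˣ × Finset W,
      ∑ i, (((ω i).2 : ℤ) : ℝ) * (((t.1 : ℤ) : ℝ) * ∑ w ∈ t.2, U (ω i).1 w)) ≤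
      Fintype.card W * √m := by
  have hmean (w : W) : 𝔼 ω : V × ℤˣ, ((ω.2 : ℤ) : ℝ) * U ω.1 w = 0 := by
    rw [← univ_product_univ, expect_product]
    simp only [expect_units_int]
    simp
  have hbound (w : W) (ω : V × ℤˣ) : |((ω.2 : ℤ) : ℝ) * U ω.1 w| ≤ 1 := by
    rw [abs_mul, abs_units_int, one_mul]
    exact hU ω.1 w
  calc 𝔼 ω : Fin m → V × ℤˣ, (⨆ t : ℤˣ × Finset W,
        ∑ i, (((ω i).2 : ℤ) : ℝ) * (((t.1 : ℤ) : ℝ) * ∑ w ∈ t.2, U (ω i).1 w))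
      ≤ 𝔼 ω : Fin m → V × ℤˣ, ∑ w, |∑ i, (((ω i).2 : ℤ) : ℝ) * U (ω i).1 w| := by
        refine expect_le_expect fun ω _ ↦ ciSup_le fun ⟨ε, B⟩ ↦ ?_
        calc ∑ i, (((ω i).2 : ℤ) : ℝ) * (((ε : ℤ) : ℝ) * ∑ w ∈ B, U (ω i).1 w)
            = ((ε : ℤ) : ℝ) * ∑ w ∈ B, ∑ i, (((ω i).2 : ℤ) : ℝ) * U (ω i).1 w := by
              rw [sum_comm]
              simp only [mul_sum, mul_left_comm]
          _ ≤ |∑ w ∈ B, ∑ i, (((ω i).2 : ℤ) : ℝ) * U (ω i).1 w| := by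
              refine (le_abs_self _).trans ?_
              rw [abs_mul, abs_units_int, one_mul]
          _ ≤ ∑ w ∈ B, |∑ i, (((ω i).2 : ℤ) : ℝ) * U (ω i).1 w| := abs_sum_le_sum_abs _ _
          _ ≤ ∑ w, |∑ i, (((ω i).2 : ℤ) : ℝ) * U (ω i).1 w| :=
              sum_le_univ_sum_of_nonneg fun w ↦ abs_nonneg _
    _ = ∑ w, 𝔼 ω : Fin m → V × ℤˣ, |∑ i, (((ω i).2 : ℤ) : ℝ) * U (ω i).1 w| :=
        expect_sum_comm _ _ _
    _ ≤ ∑ _w : W, √m := sum_le_sum fun w _ ↦ expect_abs_sum_le_sqrt (hmean w) (hbound w) m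
    _ = Fintype.card W * √m := by simp

lemma expect_cutNorm_sample_rows_le (hU : ∀ v w, |U v w| ≤ 1) (m : ℕ) :
    𝔼 φ : Fin m → V, cutNorm (fun i w ↦ U (φ i) w) univ univ ≤
      m * (cutNorm U univ univ / Fintype.card V) + 2 * (Fintype.card W * √m) := by
  have hmean (t : ℤˣ × Finset W) :
      𝔼 v, (((t.1 : ℤ) : ℝ) * ∑ w ∈ t.2, U v w)⁺ ≤ cutNorm U univ univ / Fintype.card V := by
    rw [Fintype.expect_eq_sum_div_card, cutNorm_univ_eq_iSup]
    gcongr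
    exact le_iSup_of_finite (fun t : ℤˣ × Finset W ↦ ∑ v, (((t.1 : ℤ) : ℝ) * ∑ w ∈ t.2, U v w)⁺) t
  calc 𝔼 φ : Fin m → V, cutNorm (fun i w ↦ U (φ i) w) univ univ
      = 𝔼 φ : Fin m → V, ⨆ t : ℤˣ × Finset W, ∑ i, (((t.1 : ℤ) : ℝ) * ∑ w ∈ t.2, U (φ i) w)⁺ :=
        expect_congr rfl fun φ _ ↦ cutNorm_univ_eq_iSup _
    _ ≤ _ := expect_iSup_sum_posPart_le (fun v (t : ℤˣ × Finset W) ↦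
        ((t.1 : ℤ) : ℝ) * ∑ w ∈ t.2, U v w) hmean m
    _ ≤ _ := by
        gcongr
        exact expect_iSup_rademacher_le hU m

lemma expect_cutDensity_sample_rows_le (hU : ∀ v w, |U v w| ≤ 1) {m : ℕ} (hm : 0 < m) :
    𝔼 φ : Fin m → V, cutDensity (fun i w ↦ U (φ i) w) univ univ ≤
      cutDensity U univ univ + 2 / √m := by
  have hm' : (0 : ℝ) < m := mod_cast hm
  simp only [cutDensity, card_univ, Fintype.card_fin, ← expect_div]
  calc (𝔼 φ : Fin m → V, cutNorm (fun i w ↦ U (φ i) w) univ univ) / (m * Fintype.card W)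
      ≤ (m * (cutNorm U univ univ / Fintype.card V) + 2 * (Fintype.card W * √m)) /
          (m * Fintype.card W) := by
        gcongr
        exact expect_cutNorm_sample_rows_le hU m
    _ = cutNorm U univ univ / (Fintype.card V * Fintype.card W) + 2 / √m := by
        have hsq := Real.sq_sqrt hm'.le
        field_simp
        linear_combination (2 * Fintype.card V * Fintype.card W : ℝ) * hsq

lemma expect_cutDensity_sample_le (hU : ∀ v w, |U v w| ≤ 1) {m : ℕ} (hm : 0 < m) :
    𝔼 φ : Fin m → V, 𝔼 ψ : Fin m → W, cutDensity (fun i j ↦ U (φ i) (ψ j)) univ univ ≤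
      cutDensity U univ univ + 4 / √m := by
  have : NeZero m := ⟨hm.ne'⟩
  calc 𝔼 φ : Fin m → V, 𝔼 ψ : Fin m → W, cutDensity (fun i j ↦ U (φ i) (ψ j)) univ univ
      = 𝔼 φ : Fin m → V, 𝔼 ψ : Fin m → W, cutDensity (fun j i ↦ U (φ i) (ψ j)) univ univ :=
        expect_congr rfl fun _ _ ↦ expect_congr rfl fun _ _ ↦ (cutDensity_swap _ _ _).symm
    _ ≤ 𝔼 φ : Fin m → V, (cutDensity (fun w i ↦ U (φ i) w) univ univ + 2 / √m) :=
        expect_le_expect fun φ _ ↦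
          expect_cutDensity_sample_rows_le (U := fun w i ↦ U (φ i) w) (fun w i ↦ hU (φ i) w) hm
    _ = 𝔼 φ : Fin m → V, cutDensity (fun i w ↦ U (φ i) w) univ univ + 2 / √m := by
        rw [expect_add_distrib, Fintype.expect_const]
        exact congrArg (· + 2 / √m) (expect_congr rfl fun _ _ ↦ cutDensity_swap _ _ _)
    _ ≤ cutDensity U univ univ + 2 / √m + 2 / √m := by
        gcongr
        exact expect_cutDensity_sample_rows_le hU hm
    _ = cutDensity U univ univ + 4 / √m := by ring

end RowSampling

section RandomPermutation

open Equiv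

variable {V : Type*} {K : Finset V}

lemma expect_map {ι : Type*} (f : ι ↪ V) (s : Finset ι) (F : V → ℝ) :
    𝔼 x ∈ s.map f, F x = 𝔼 i ∈ s, F (f i) := by
  simp only [expect_eq_sum_div_card, sum_map, card_map]

lemma exists_perm_map_eq [Finite V] {S T : Finset V} (h : #S = #T) :
    ∃ σ : Perm V, S.map σ.toEmbedding = T := by
  classical
  have := Set.powersetCard.isPretransitive (α := V) (n := #T)
  obtain ⟨σ, hσ⟩ := MulAction.exists_smul_eq (Perm V) (⟨S, h⟩ : Set.powersetCard V #T) ⟨T, rfl⟩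
  refine ⟨σ, ?_⟩
  rw [map_eq_image]
  exact congrArg Subtype.val hσ

lemma exists_perm_map_eq_self {u v x y : V} (hu : u ∈ K) (hv : v ∈ K) (hx : x ∈ K) (hy : y ∈ K)
    (huv : u ≠ v) (hxy : x ≠ y) :
    ∃ σ : Perm V, K.map σ.toEmbedding = K ∧ σ u = x ∧ σ v = y := by
  classical
  have huv' : (⟨u, hu⟩ : K) ≠ ⟨v, hv⟩ := by simpa
  have hxy' : (⟨x, hx⟩ : K) ≠ ⟨y, hy⟩ := by simpa
  obtain ⟨σ, hσx, hσy⟩ :=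
    MulAction.is_two_pretransitive_iff.1 (Perm.isMultiplyPretransitive K 2) huv' hxy'
  refine ⟨Perm.ofSubtype σ, map_perm fun a ha ↦ ?_, ?_, ?_⟩
  · by_contra haK
    exact ha (Perm.ofSubtype_apply_of_not_mem σ haK)
  · rw [Perm.ofSubtype_apply_of_mem σ hu]
    exact congrArg Subtype.val hσx
  · rw [Perm.ofSubtype_apply_of_mem σ hv]
    exact congrArg Subtype.val hσy

variable [Fintype V] [DecidableEq V]

lemma expect_perm_map_map (σ : Perm V) (K : Finset V) (F : Finset V → Perm V → ℝ) :
    𝔼 π : Perm V, F (K.map (π * σ).toEmbedding) (π * σ) = 𝔼 π : Perm V, F (K.map π.toEmbedding) π :=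
  Fintype.expect_equiv (Equiv.mulRight σ) _ _ fun _ ↦ rfl

lemma expect_perm_map {k : ℕ} (hK : #K = k) (F : Finset V → ℝ) :
    𝔼 π : Perm V, F (K.map π.toEmbedding) = 𝔼 S ∈ powersetCard k univ, F S := by
  have hinvariant {S : Finset V} (hS : S ∈ powersetCard k univ) :
      𝔼 π : Perm V, F (K.map π.toEmbedding) = 𝔼 π : Perm V, F (S.map π.toEmbedding) := by
    obtain ⟨σ, rfl⟩ := exists_perm_map_eq (hK.trans (mem_powersetCard_univ.1 hS).symm)
    rw [← expect_perm_map_map σ K fun S _ ↦ F S]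
    simp only [map_map]
    rfl
  calc 𝔼 π : Perm V, F (K.map π.toEmbedding)
      = 𝔼 S ∈ powersetCard k univ, 𝔼 π : Perm V, F (S.map π.toEmbedding) := by
        rw [expect_congr rfl fun S hS ↦ (hinvariant hS).symm,
          expect_const ⟨K, mem_powersetCard_univ.2 hK⟩]
    _ = 𝔼 π : Perm V, 𝔼 S ∈ (powersetCard k univ).map (mapEmbedding π.toEmbedding).toEmbedding,
          F S := by
        rw [expect_comm]
        simp only [expect_map]
        rfl
    _ = 𝔼 S ∈ powersetCard k univ, F S := by
        simp only [← powersetCard_map, map_univ_equiv, Fintype.expect_const]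

lemma expect_perm_apply_apply_eq (b : Finset V → V → V → ℝ) {u v x y : V} (hu : u ∈ K) (hv : v ∈ K)
    (hx : x ∈ K) (hy : y ∈ K) (huv : u ≠ v) (hxy : x ≠ y) :
    𝔼 π : Perm V, b (K.map π.toEmbedding) (π u) (π v) =
      𝔼 π : Perm V, b (K.map π.toEmbedding) (π x) (π y) := by
  obtain ⟨σ, hσ, rfl, rfl⟩ := exists_perm_map_eq_self hu hv hx hy huv hxy
  rw [← expect_perm_map_map σ K fun S π ↦ b S (π u) (π v)]
  refine expect_congr rfl fun π _ ↦ ?_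
  conv_rhs => rw [← hσ, map_map]
  rfl

end RandomPermutation

section Decoupling

variable {V ι κ : Type*} [DecidableEq V] {K : Finset V} {I : Finset ι} {J : Finset κ}

lemma expect_expect_ite_eq (K : Finset V) (c : ℝ) :
    𝔼 x ∈ K, 𝔼 y ∈ K, (if x = y then c else 0) = c / #K := by
  rcases K.eq_empty_or_nonempty with rfl | hK
  · simp
  · rw [← expect_const hK (c / #K)]
    refine expect_congr rfl fun x hx ↦ ?_
    simp [expect_eq_sum_div_card, hx]

lemma expect_expect_le_of_const_offDiag {a : V → V → ℝ} (ha : ∀ u v, |a u v| ≤ 1)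
    (hconst : ∀ {u v x y}, u ∈ K → v ∈ K → x ∈ K → y ∈ K → u ≠ v → x ≠ y → a u v = a x y)
    {u v : V} (hu : u ∈ K) (hv : v ∈ K) :
    𝔼 x ∈ K, 𝔼 y ∈ K, a x y ≤ a u v + 2 / #K + if u = v then 2 else 0 := by
  have hK : K.Nonempty := ⟨u, hu⟩
  have hle {x y : V} (hx : x ∈ K) (hy : y ∈ K) :
      a x y ≤ a u v + (if x = y then 2 else 0) + if u = v then 2 else 0 := by
    have hxy := abs_le.1 (ha x y)
    have huv := abs_le.1 (ha u v)
    split_ifs with hx' hu' hu'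
    iterate 3 linarith
    linarith [hconst hx hy hu hv hx' hu']
  calc 𝔼 x ∈ K, 𝔼 y ∈ K, a x y
      ≤ 𝔼 x ∈ K, 𝔼 y ∈ K, (a u v + (if x = y then 2 else 0) + if u = v then 2 else 0) :=
        expect_le_expect fun x hx ↦ expect_le_expect fun y hy ↦ hle hx hy
    _ = a u v + 2 / #K + if u = v then 2 else 0 := by
        simp only [expect_add_distrib, expect_const hK, expect_expect_ite_eq]

variable [Fintype V] {U : V → V → ℝ}

open Equiv

lemma expect_perm_expect_expect_le {b : Finset V → V → V → ℝ} (hb : ∀ S u v, |b S u v| ≤ 1)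
    (hI : I.Nonempty) (hJ : J.Nonempty) {φ : ι → V} {ψ : κ → V} (hφ : ∀ i ∈ I, φ i ∈ K)
    (hψ : ∀ j ∈ J, ψ j ∈ K) :
    𝔼 π : Perm V, 𝔼 x ∈ K, 𝔼 y ∈ K, b (K.map π.toEmbedding) (π x) (π y) ≤
      𝔼 π : Perm V, 𝔼 i ∈ I, 𝔼 j ∈ J, b (K.map π.toEmbedding) (π (φ i)) (π (ψ j)) + 2 / #K +
        𝔼 i ∈ I, 𝔼 j ∈ J, if φ i = ψ j then 2 else 0 := by
  let a (u v : V) : ℝ := 𝔼 π : Perm V, b (K.map π.toEmbedding) (π u) (π v)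
  have ha (u v : V) : |a u v| ≤ 1 :=
    (abs_expect_le _ _).trans (expect_le univ_nonempty fun _ _ ↦ hb _ _ _)
  calc 𝔼 π : Perm V, 𝔼 x ∈ K, 𝔼 y ∈ K, b (K.map π.toEmbedding) (π x) (π y)
      = 𝔼 x ∈ K, 𝔼 y ∈ K, a x y := by
        rw [expect_comm]
        exact expect_congr rfl fun _ _ ↦ expect_comm _ _ _
    _ = 𝔼 _i ∈ I, 𝔼 _j ∈ J, 𝔼 x ∈ K, 𝔼 y ∈ K, a x y := by rw [expect_const hJ, expect_const hI]
    _ ≤ 𝔼 i ∈ I, 𝔼 j ∈ J, (a (φ i) (ψ j) + 2 / #K + if φ i = ψ j then 2 else 0) :=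
        expect_le_expect fun _ hi ↦ expect_le_expect fun _ hj ↦
          expect_expect_le_of_const_offDiag ha (expect_perm_apply_apply_eq b) (hφ _ hi) (hψ _ hj)
    _ = 𝔼 i ∈ I, 𝔼 j ∈ J, a (φ i) (ψ j) + 2 / #K +
          𝔼 i ∈ I, 𝔼 j ∈ J, if φ i = ψ j then 2 else 0 := by
        simp only [expect_add_distrib, expect_const hI, expect_const hJ]
    _ = _ := by
        rw [expect_comm (s := univ)]
        congr 2
        exact expect_congr rfl fun _ _ ↦ (expect_comm _ _ _).symm

lemma expect_perm_cutDensity_map_le (hU : ∀ u v, |U u v| ≤ 1) (hI : I.Nonempty) (hJ : J.Nonempty)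
    {φ : ι → V} {ψ : κ → V} (hφ : ∀ i ∈ I, φ i ∈ K) (hψ : ∀ j ∈ J, ψ j ∈ K) :
    𝔼 π : Perm V, cutDensity U (K.map π.toEmbedding) (K.map π.toEmbedding) ≤
      𝔼 π : Perm V, cutDensity (fun i j ↦ U (π (φ i)) (π (ψ j))) I J + 2 / #K +
        𝔼 i ∈ I, 𝔼 j ∈ J, if φ i = ψ j then 2 else 0 := by
  -- The extremal rectangle depends on `π` only through the set `K.map π`, and `π` may be composed
  -- with any permutation of `K` without changing that set.
  choose p hp using fun S : Finset V ↦ exists_cutDensity_eq U S S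
  let b (S : Finset V) (s t : V) : ℝ :=
    if s ∈ (p S).1 ∧ t ∈ (p S).2.1 then (((p S).2.2 : ℤ) : ℝ) * U s t else 0
  have hb (S : Finset V) (s t : V) : |b S s t| ≤ 1 := by
    simp only [b]
    split_ifs
    · simpa only [abs_mul, abs_units_int, one_mul] using hU s t
    · simp
  calc 𝔼 π : Perm V, cutDensity U (K.map π.toEmbedding) (K.map π.toEmbedding)
      = 𝔼 π : Perm V, 𝔼 x ∈ K, 𝔼 y ∈ K, b (K.map π.toEmbedding) (π x) (π y) := by
        simp only [hp, expect_map]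
        rfl
    _ ≤ _ := expect_perm_expect_expect_le hb hI hJ hφ hψ
    _ ≤ _ := by
        gcongr with π
        exact expect_ite_le_cutDensity (fun i j ↦ U (π (φ i)) (π (ψ j))) I J _ _ _

end Decoupling

section Mean

variable {V : Type*} [Fintype V] {U : V → V → ℝ} {k : ℕ}

lemma expect_pi_apply [Nonempty V] {ι : Type*} [Fintype ι] [DecidableEq ι] (F : V → ℝ) (i : ι) :
    𝔼 φ : ι → V, F (φ i) = 𝔼 v, F v := by
  classical
  have hsum := Fintype.sum_piFinset_apply F univ i
  rw [Fintype.piFinset_univ] at hsum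
  have hV : (Fintype.card V : ℝ) ≠ 0 := mod_cast Fintype.card_ne_zero
  have : Nonempty ι := ⟨i⟩
  rw [Fintype.expect_eq_sum_div_card, Fintype.expect_eq_sum_div_card, hsum, Fintype.card_fun,
    ← pow_sub_one_mul Fintype.card_ne_zero, nsmul_eq_mul]
  push_cast
  rw [card_univ, mul_div_mul_left _ _ (pow_ne_zero _ hV)]

lemma expect_expect_expect_ite_apply_eq [Nonempty V] [DecidableEq V] {ι κ : Type*} [Fintype ι]
    [Fintype κ] [DecidableEq κ] [Nonempty ι] [Nonempty κ] (φ : ι → V) (c : ℝ) :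
    𝔼 ψ : κ → V, 𝔼 i, 𝔼 j, (if φ i = ψ j then c else 0) = c / Fintype.card V := by
  have hvalue (i : ι) (j : κ) :
      𝔼 ψ : κ → V, (if φ i = ψ j then c else 0) = c / Fintype.card V := by
    rw [expect_pi_apply (fun v ↦ if φ i = v then c else 0) j]
    simp only [Fintype.expect_eq_sum_div_card, sum_ite_eq, mem_univ, if_true]
  rw [expect_comm]
  simp only [expect_comm (s := (univ : Finset (κ → V))) (t := (univ : Finset κ)), hvalue,
    Fintype.expect_const]

lemma cutDensity_univ_le_expect_powersetCard (hU : ∀ u v, |U u v| ≤ 1) (hk : 0 < k)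
    (hcard : k ≤ Fintype.card V) :
    cutDensity U univ univ ≤ 𝔼 S ∈ powersetCard k univ, cutDensity U S S + 4 / k := by
  classical
  obtain ⟨L, -, hL⟩ := exists_subset_card_eq (s := (univ : Finset V)) hcard
  have hLne : L.Nonempty := card_pos.1 (hL ▸ hk)
  calc cutDensity U univ univ
      ≤ 𝔼 π : Equiv.Perm V, cutDensity (fun u v ↦ U (π u) (π v)) L L + 2 / Fintype.card V +
          𝔼 u ∈ L, 𝔼 v ∈ L, if u = v then 2 else 0 := by
        simpa using expect_perm_cutDensity_map_le (K := univ) hU hLne hLne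
          (fun u _ ↦ mem_univ (id u)) fun v _ ↦ mem_univ (id v)
    _ = 𝔼 S ∈ powersetCard k univ, cutDensity U S S + 2 / Fintype.card V + 2 / k := by
        rw [expect_expect_ite_eq, hL, ← expect_perm_map hL fun S ↦ cutDensity U S S]
        simp only [cutDensity_map]
        rfl
    _ ≤ 𝔼 S ∈ powersetCard k univ, cutDensity U S S + 2 / k + 2 / k := by gcongr
    _ = 𝔼 S ∈ powersetCard k univ, cutDensity U S S + 4 / k := by ring

lemma expect_powersetCard_cutDensity_le_of_pair (hU : ∀ u v, |U u v| ≤ 1) {m : ℕ} (hm : 0 < m)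
    (hmk : 2 * m ≤ k) (hcard : k ≤ Fintype.card V) [DecidableEq V] (φ ψ : Fin m → V) :
    𝔼 S ∈ powersetCard k univ, cutDensity U S S ≤
      𝔼 π : Equiv.Perm V, cutDensity (fun i j ↦ U (π (φ i)) (π (ψ j))) univ univ + 2 / k +
        𝔼 i, 𝔼 j, if φ i = ψ j then 2 else 0 := by
  have : NeZero m := ⟨hm.ne'⟩
  have himages : #(univ.image φ ∪ univ.image ψ) ≤ k := by
    have hφ := card_image_le (s := univ) (f := φ)
    have hψ := card_image_le (s := univ) (f := ψ)
    have hunion := card_union_le (univ.image φ) (univ.image ψ)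
    simp only [card_univ, Fintype.card_fin] at hφ hψ
    lia
  obtain ⟨K, hK, rfl⟩ := exists_superset_card_eq himages hcard
  rw [← expect_perm_map rfl fun S ↦ cutDensity U S S]
  exact expect_perm_cutDensity_map_le hU univ_nonempty univ_nonempty
    (fun i _ ↦ hK (mem_union_left _ (mem_image_of_mem φ (mem_univ i))))
    (fun j _ ↦ hK (mem_union_right _ (mem_image_of_mem ψ (mem_univ j))))

lemma expect_powersetCard_cutDensity_le (hU : ∀ u v, |U u v| ≤ 1) {m : ℕ} (hm : 0 < m)
    (hmk : 2 * m ≤ k) (hcard : k ≤ Fintype.card V) :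
    𝔼 S ∈ powersetCard k univ, cutDensity U S S ≤ cutDensity U univ univ + 4 / √m + 4 / k := by
  classical
  have : NeZero m := ⟨hm.ne'⟩
  have hk : 0 < k := by lia
  have : Nonempty V := Fintype.card_pos_iff.1 (hk.trans_le hcard)
  have hsample (π : Equiv.Perm V) : 𝔼 φ : Fin m → V, 𝔼 ψ : Fin m → V,
      cutDensity (fun i j ↦ U (π (φ i)) (π (ψ j))) univ univ ≤ cutDensity U univ univ + 4 / √m :=
    calc _ ≤ cutDensity (fun u v ↦ U (π u) (π v)) univ univ + 4 / √m :=
          expect_cutDensity_sample_le (U := fun u v ↦ U (π u) (π v)) (fun _ _ ↦ hU _ _) hm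
      _ = cutDensity U univ univ + 4 / √m := by
          have hmap := cutDensity_map U π.toEmbedding π.toEmbedding univ univ
          rw [map_univ_equiv] at hmap
          rw [hmap]
          rfl
  calc 𝔼 S ∈ powersetCard k univ, cutDensity U S S
      = 𝔼 φ : Fin m → V, 𝔼 ψ : Fin m → V, 𝔼 S ∈ powersetCard k univ, cutDensity U S S := by
        simp only [Fintype.expect_const]
    _ ≤ 𝔼 φ : Fin m → V, 𝔼 ψ : Fin m → V,
          (𝔼 π : Equiv.Perm V, cutDensity (fun i j ↦ U (π (φ i)) (π (ψ j))) univ univ + 2 / k +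
            𝔼 i, 𝔼 j, if φ i = ψ j then 2 else 0) :=
        expect_le_expect fun φ _ ↦ expect_le_expect fun ψ _ ↦
          expect_powersetCard_cutDensity_le_of_pair hU hm hmk hcard φ ψ
    _ = 𝔼 π : Equiv.Perm V, 𝔼 φ : Fin m → V, 𝔼 ψ : Fin m → V,
          cutDensity (fun i j ↦ U (π (φ i)) (π (ψ j))) univ univ + 2 / k + 2 / Fintype.card V := by
        simp only [expect_add_distrib, Fintype.expect_const, expect_expect_expect_ite_apply_eq]
        rw [expect_comm (s := (univ : Finset (Equiv.Perm V)))]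
        congr 2
        exact expect_congr rfl fun _ _ ↦ expect_comm _ _ _
    _ ≤ (cutDensity U univ univ + 4 / √m) + 2 / k + 2 / k := by
        gcongr
        exact expect_le univ_nonempty fun π _ ↦ hsample π
    _ = cutDensity U univ univ + 4 / √m + 4 / k := by ring

lemma four_div_sqrt_half_add_le {q : ℝ} (hq : 9 ≤ q) {k : ℕ} (hk : 2 ≤ k) (hkq : (k : ℝ) = q ^ 4) :
    4 / √(k / 2 : ℕ) + 4 / k ≤ 9 / q := by
  have hsqrt : q ^ 2 / 2 ≤ √(k / 2 : ℕ) := by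
    refine Real.le_sqrt_of_sq_le ?_
    have hhalf : (k : ℝ) ≤ 4 * (k / 2 : ℕ) := mod_cast (by lia : k ≤ 4 * (k / 2))
    nlinarith
  calc 4 / √(k / 2 : ℕ) + 4 / k ≤ 4 / (q ^ 2 / 2) + 4 / q ^ 4 := by
        rw [hkq]
        gcongr
    _ ≤ 9 / q := by
        rw [div_add_div _ _ (by positivity) (by positivity), div_le_div_iff₀ (by positivity)
          (by positivity)]
        nlinarith [pow_pos (by positivity : 0 < q) 3, pow_pos (by positivity : 0 < q) 5]

lemma abs_expect_powersetCard_cutDensity_sub_le (hU : ∀ u v, |U u v| ≤ 1) (hk : 0 < k)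
    (hcard : k ≤ Fintype.card V) :
    |𝔼 S ∈ powersetCard k univ, cutDensity U S S - cutDensity U univ univ| ≤
      9 / (k : ℝ) ^ (1 / 4 : ℝ) := by
  set q : ℝ := (k : ℝ) ^ (1 / 4 : ℝ) with hq
  have hq_pos : 0 < q := by positivity
  have hkq : (k : ℝ) = q ^ 4 := by
    rw [hq, ← Real.rpow_natCast, ← Real.rpow_mul k.cast_nonneg]
    norm_num
  rcases le_total q 9 with hq9 | hq9
  · have hmean_nonneg : 0 ≤ 𝔼 S ∈ powersetCard k univ, cutDensity U S S :=
      expect_nonneg fun S _ ↦ cutDensity_nonneg U S S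
    have hmean_le : 𝔼 S ∈ powersetCard k univ, cutDensity U S S ≤ 1 :=
      expect_le (powersetCard_nonempty.2 hcard) fun S _ ↦ cutDensity_le_one hU S S
    calc |𝔼 S ∈ powersetCard k univ, cutDensity U S S - cutDensity U univ univ| ≤ 1 - 0 :=
          abs_sub_le_of_le_of_le hmean_nonneg hmean_le (cutDensity_nonneg U univ univ)
            (cutDensity_le_one hU univ univ)
      _ ≤ 9 / q := by rwa [sub_zero, one_le_div hq_pos]
  · have hk2 : 2 ≤ k := by
      have : (9 : ℝ) ^ 4 ≤ k := hkq ▸ pow_le_pow_left₀ (by norm_num) hq9 4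
      have : 9 ^ 4 ≤ k := mod_cast this
      lia
    have hupper := expect_powersetCard_cutDensity_le hU (Nat.div_pos hk2 two_pos)
      (Nat.mul_div_le k 2) hcard
    have hlower := cutDensity_univ_le_expect_powersetCard hU hk hcard
    have herror := four_div_sqrt_half_add_le hq9 hk2 hkq
    have : 0 ≤ 4 / √(k / 2 : ℕ) := by positivity
    rw [abs_sub_le_iff]
    constructor <;> linarith

end Mean

section Concentration

variable {ι V : Type*}

lemma expect_exp_le_exp_half_sq {s : Finset ι} (hs : s.Nonempty) {x : ι → ℝ} {c : ℝ}
    (hx : ∀ i ∈ s, |x i| ≤ c) (hmean : 𝔼 i ∈ s, x i = 0) :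
    𝔼 i ∈ s, Real.exp (x i) ≤ Real.exp (c ^ 2 / 2) := by
  have hconvex {i : ι} (hi : i ∈ s) :
      Real.exp (x i) ≤ Real.cosh c + x i * (Real.sinh c / c) := by
    have hc : c = 0 → x i = 0 := fun h ↦ abs_nonpos_iff.1 (h ▸ hx i hi)
    have habs : |x i / c| ≤ 1 := by
      rw [abs_div]
      exact div_le_one_of_le₀ ((hx i hi).trans (le_abs_self c)) (abs_nonneg c)
    simpa only [div_mul_cancel_of_imp hc, div_mul_eq_mul_div, mul_div_assoc] using
      Real.exp_mul_le_cosh_add_mul_sinh habs c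
  calc 𝔼 i ∈ s, Real.exp (x i) ≤ 𝔼 i ∈ s, (Real.cosh c + x i * (Real.sinh c / c)) :=
        expect_le_expect fun i hi ↦ hconvex hi
    _ = Real.cosh c := by
        rw [expect_add_distrib, expect_const hs, ← expect_mul, hmean, zero_mul, add_zero]
    _ ≤ Real.exp (c ^ 2 / 2) := Real.cosh_le_exp_half_sq c

lemma expect_exp_le_exp_expect_add {s : Finset ι} (hs : s.Nonempty) {g : ι → ℝ} {c : ℝ}
    (hg : ∀ i ∈ s, ∀ j ∈ s, g i - g j ≤ c) :
    𝔼 i ∈ s, Real.exp (g i) ≤ Real.exp (𝔼 i ∈ s, g i + c ^ 2 / 2) := by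
  set μ := 𝔼 i ∈ s, g i
  have hdev (i : ι) (hi : i ∈ s) : |g i - μ| ≤ c := by
    rw [← expect_const hs (g i), ← expect_sub_distrib]
    exact (abs_expect_le _ _).trans (expect_le hs fun j hj ↦
      abs_sub_le_iff.2 ⟨hg i hi j hj, hg j hj i hi⟩)
  have hmean : 𝔼 i ∈ s, (g i - μ) = 0 := by rw [expect_sub_distrib, expect_const hs, sub_self]
  calc 𝔼 i ∈ s, Real.exp (g i) = Real.exp μ * 𝔼 i ∈ s, Real.exp (g i - μ) := by
        simp only [mul_expect, ← Real.exp_add, add_sub_cancel]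
    _ ≤ Real.exp μ * Real.exp (c ^ 2 / 2) := by
        gcongr
        exact expect_exp_le_exp_half_sq hs hdev hmean
    _ = Real.exp (μ + c ^ 2 / 2) := (Real.exp_add _ _).symm

lemma card_filter_le_exp_mul_card {s : Finset ι} {f : ι → ℝ} {B : ℝ}
    (h : 𝔼 i ∈ s, Real.exp (f i) ≤ Real.exp B) (t : ℝ) :
    (#{i ∈ s | t ≤ f i} : ℝ) ≤ Real.exp (B - t) * #s := by
  have hsum : #{i ∈ s | t ≤ f i} * Real.exp t ≤ Real.exp B * #s :=
    calc #{i ∈ s | t ≤ f i} * Real.exp t ≤ ∑ i ∈ s with t ≤ f i, Real.exp (f i) := by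
          rw [← nsmul_eq_mul]
          exact card_nsmul_le_sum _ _ _ fun i hi ↦ Real.exp_le_exp.2 (mem_filter.1 hi).2
      _ ≤ ∑ i ∈ s, Real.exp (f i) :=
          sum_le_sum_of_subset_of_nonneg (filter_subset _ _) fun _ _ _ ↦ (Real.exp_pos _).le
      _ = (𝔼 i ∈ s, Real.exp (f i)) * #s := by rw [mul_comm, card_mul_expect]
      _ ≤ Real.exp B * #s := by gcongr
  rwa [Real.exp_sub, div_mul_eq_mul_div, le_div_iff₀ (Real.exp_pos t)]

variable [DecidableEq V] {W : Finset V} {k : ℕ} {f : Finset V → ℝ} {c : ℝ}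

lemma sum_powersetCard_erase_insert {v : V} (hv : v ∈ W) (k : ℕ) (f : Finset V → ℝ) :
    ∑ T ∈ powersetCard k (W.erase v), f (insert v T) =
      ∑ S ∈ powersetCard (k + 1) W with v ∈ S, f S := by
  have hnotMem {T : Finset V} (hT : T ∈ powersetCard k (W.erase v)) : v ∉ T :=
    fun h ↦ notMem_erase v W ((mem_powersetCard.1 hT).1 h)
  refine sum_nbij' (insert v) (erase · v) (fun T hT ↦ ?_) (fun S hS ↦ ?_)
    (fun T hT ↦ erase_insert (hnotMem hT)) (fun S hS ↦ insert_erase (mem_filter.1 hS).2)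
    fun _ _ ↦ rfl
  · obtain ⟨hTW, hcard⟩ := mem_powersetCard.1 hT
    rw [mem_filter, mem_powersetCard, card_insert_of_notMem (hnotMem hT), hcard]
    exact ⟨⟨insert_subset hv (hTW.trans (erase_subset v W)), rfl⟩, mem_insert_self v T⟩
  · rw [mem_filter, mem_powersetCard] at hS
    rw [mem_powersetCard, card_erase_of_mem hS.2, hS.1.2]
    exact ⟨erase_subset_erase v hS.1.1, rfl⟩

lemma sum_sum_powersetCard_erase_insert (W : Finset V) (k : ℕ) (f : Finset V → ℝ) :
    ∑ v ∈ W, ∑ T ∈ powersetCard k (W.erase v), f (insert v T) =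
      (k + 1) * ∑ S ∈ powersetCard (k + 1) W, f S :=
  calc ∑ v ∈ W, ∑ T ∈ powersetCard k (W.erase v), f (insert v T)
      = ∑ v ∈ W, ∑ S ∈ powersetCard (k + 1) W with v ∈ S, f S :=
        sum_congr rfl fun _ hv ↦ sum_powersetCard_erase_insert hv k f
    _ = ∑ S ∈ powersetCard (k + 1) W, ∑ _v ∈ S, f S := by
        refine sum_comm' fun v S ↦ ?_
        rw [mem_filter]
        exact ⟨fun h ↦ h.2.symm, fun h ↦ ⟨(mem_powersetCard.1 h.2).1 h.1, h.2, h.1⟩⟩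
    _ = (k + 1) * ∑ S ∈ powersetCard (k + 1) W, f S := by
        rw [mul_sum]
        refine sum_congr rfl fun S hS ↦ ?_
        rw [sum_const, (mem_powersetCard.1 hS).2, nsmul_eq_mul, Nat.cast_succ]

lemma expect_powersetCard_succ (hk : k < #W) (f : Finset V → ℝ) :
    𝔼 S ∈ powersetCard (k + 1) W, f S =
      𝔼 v ∈ W, 𝔼 T ∈ powersetCard k (W.erase v), f (insert v T) := by
  have herase {v : V} (hv : v ∈ W) : 𝔼 T ∈ powersetCard k (W.erase v), f (insert v T) =
      (∑ T ∈ powersetCard k (W.erase v), f (insert v T)) / (#W - 1).choose k := by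
    rw [expect_eq_sum_div_card, card_powersetCard, card_erase_of_mem hv]
  obtain ⟨n, hn⟩ : ∃ n, #W = n + 1 := Nat.exists_eq_succ_of_ne_zero (by lia)
  have hchoose : ((n : ℝ) + 1) * n.choose k = (n + 1).choose (k + 1) * (k + 1) :=
    mod_cast Nat.add_one_mul_choose_eq n k
  rw [expect_congr rfl fun v ↦ herase, ← expect_div, expect_eq_sum_div_card,
    expect_eq_sum_div_card, sum_sum_powersetCard_erase_insert, card_powersetCard, hn, div_div,
    Nat.cast_succ, Nat.add_sub_cancel, hchoose, mul_comm ((k : ℝ) + 1),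
    mul_div_mul_right _ _ (by positivity)]

lemma sub_map_swap_le (hc : 0 ≤ c) (hf : ∀ T x y, #T < k → f (insert x T) - f (insert y T) ≤ c)
    {v w : V} {T : Finset V} (hT : #T < k) (hv : v ∉ T) :
    f (insert v T) - f ((insert v T).map (Equiv.swap v w).toEmbedding) ≤ c := by
  by_cases hw : w ∈ insert v T
  · rw [map_perm fun a ha ↦ ?_]
    · simpa using hc
    · rcases Equiv.swap_apply_ne_self_iff.1 ha with ⟨-, rfl | rfl⟩ <;> simp_all
  · have hfix : T.map (Equiv.swap v w).toEmbedding = T := by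
      rw [mem_insert, not_or] at hw
      rw [map_eq_image, image_congr (g := id) fun a ha ↦ ?_, image_id]
      exact Equiv.swap_apply_of_ne_of_ne (ne_of_mem_of_not_mem ha hv)
        (ne_of_mem_of_not_mem ha hw.2)
    rw [map_insert, hfix, Equiv.coe_toEmbedding, Equiv.swap_apply_left]
    exact hf T v w hT

lemma expect_powersetCard_erase_insert_sub_le (hc : 0 ≤ c)
    (hf : ∀ T x y, #T < k + 1 → f (insert x T) - f (insert y T) ≤ c) (hk : k < #W) {v w : V}
    (hv : v ∈ W) (hw : w ∈ W) :
    𝔼 T ∈ powersetCard k (W.erase v), f (insert v T) -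
      𝔼 T ∈ powersetCard k (W.erase w), f (insert w T) ≤ c := by
  have hmap : (W.erase v).map (Equiv.swap v w).toEmbedding = W.erase w := by
    rw [map_erase, map_perm fun a ha ↦ ?_, Equiv.coe_toEmbedding, Equiv.swap_apply_left]
    rcases Equiv.swap_apply_ne_self_iff.1 ha with ⟨-, rfl | rfl⟩ <;> assumption
  have hne : (powersetCard k (W.erase v)).Nonempty := by
    rw [powersetCard_nonempty, card_erase_of_mem hv]
    lia
  rw [← hmap, powersetCard_map, expect_map, ← expect_sub_distrib]
  refine expect_le hne fun T hT ↦ ?_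
  obtain ⟨hTW, hcard⟩ := mem_powersetCard.1 hT
  simpa [map_insert] using sub_map_swap_le (w := w) hc hf (hcard ▸ k.lt_succ_self)
    fun h ↦ notMem_erase v W (hTW h)

lemma expect_powersetCard_exp_le (hk : k ≤ #W) (hc : 0 ≤ c)
    (hf : ∀ T x y, #T < k → f (insert x T) - f (insert y T) ≤ c) :
    𝔼 S ∈ powersetCard k W, Real.exp (f S) ≤
      Real.exp (𝔼 S ∈ powersetCard k W, f S + k * (c ^ 2 / 2)) := by
  induction k generalizing W f with
  | zero => simp
  | succ k ih =>
    have hW : W.Nonempty := card_pos.1 (by lia)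
    set g : V → ℝ := fun v ↦ 𝔼 T ∈ powersetCard k (W.erase v), f (insert v T)
    have hcond {v : V} (hv : v ∈ W) : 𝔼 T ∈ powersetCard k (W.erase v), Real.exp (f (insert v T)) ≤
        Real.exp (g v + k * (c ^ 2 / 2)) := by
      refine ih (f := fun T ↦ f (insert v T)) ?_ fun T x y hT ↦ ?_
      · rw [card_erase_of_mem hv]
        lia
      · rw [insert_comm v x, insert_comm v y]
        exact hf _ x y ((card_insert_le v T).trans_lt (by lia))
    have hg : 𝔼 v ∈ W, Real.exp (g v) ≤ Real.exp (𝔼 v ∈ W, g v + c ^ 2 / 2) :=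
      expect_exp_le_exp_expect_add hW fun v hv w hw ↦
        expect_powersetCard_erase_insert_sub_le hc hf hk hv hw
    rw [expect_powersetCard_succ hk, expect_powersetCard_succ hk]
    calc 𝔼 v ∈ W, 𝔼 T ∈ powersetCard k (W.erase v), Real.exp (f (insert v T))
        ≤ 𝔼 v ∈ W, Real.exp (g v + k * (c ^ 2 / 2)) := expect_le_expect fun v ↦ hcond
      _ = (𝔼 v ∈ W, Real.exp (g v)) * Real.exp (k * (c ^ 2 / 2)) := by
          simp only [Real.exp_add, expect_mul]
      _ ≤ Real.exp (𝔼 v ∈ W, g v + c ^ 2 / 2) * Real.exp (k * (c ^ 2 / 2)) := by gcongr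
      _ = Real.exp (𝔼 v ∈ W, g v + (k + 1 : ℕ) * (c ^ 2 / 2)) := by
          rw [← Real.exp_add]
          push_cast
          ring_nf

lemma card_filter_powersetCard_le_sub_expect_le (hk : k ≤ #W) (hc : 0 ≤ c)
    (hf : ∀ T x y, #T < k → f (insert x T) - f (insert y T) ≤ c) {t : ℝ} (ht : 0 ≤ t) :
    (#{S ∈ powersetCard k W | t ≤ f S - 𝔼 S ∈ powersetCard k W, f S} : ℝ) ≤
      Real.exp (-t ^ 2 / (2 * (k * c ^ 2))) * #(powersetCard k W) := by
  set μ := 𝔼 S ∈ powersetCard k W, f S with hμ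
  set r := t / (k * c ^ 2) with hr
  have hr_nonneg : 0 ≤ r := by positivity
  have hmgf : 𝔼 S ∈ powersetCard k W, Real.exp (r * f S) ≤
      Real.exp (r * μ + k * ((r * c) ^ 2 / 2)) := by
    rw [hμ, mul_expect]
    refine expect_powersetCard_exp_le hk (by positivity) fun T x y hT ↦ ?_
    rw [← mul_sub]
    exact mul_le_mul_of_nonneg_left (hf T x y hT) hr_nonneg
  have hexponent : r * μ + k * ((r * c) ^ 2 / 2) - r * (μ + t) = -t ^ 2 / (2 * (k * c ^ 2)) := by
    rcases eq_or_ne (k * c ^ 2) 0 with h0 | -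
    · simp [hr, h0]
    · rw [hr]
      field_simp
      ring
  calc (#{S ∈ powersetCard k W | t ≤ f S - μ} : ℝ)
      ≤ #{S ∈ powersetCard k W | r * (μ + t) ≤ r * f S} := by
        refine Nat.cast_le.2 (card_le_card (monotone_filter_right _ fun S _ hS ↦ ?_))
        exact mul_le_mul_of_nonneg_left (by linarith) hr_nonneg
    _ ≤ Real.exp (r * μ + k * ((r * c) ^ 2 / 2) - r * (μ + t)) * #(powersetCard k W) :=
        card_filter_le_exp_mul_card hmgf _
    _ = Real.exp (-t ^ 2 / (2 * (k * c ^ 2))) * #(powersetCard k W) := by rw [hexponent]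

lemma card_filter_powersetCard_le_abs_sub_expect_le (hk : k ≤ #W) (hc : 0 ≤ c)
    (hf : ∀ T x y, #T < k → f (insert x T) - f (insert y T) ≤ c) {t : ℝ} (ht : 0 ≤ t) :
    (#{S ∈ powersetCard k W | t ≤ |f S - 𝔼 S ∈ powersetCard k W, f S|} : ℝ) ≤
      2 * Real.exp (-t ^ 2 / (2 * (k * c ^ 2))) * #(powersetCard k W) := by
  have hupper := card_filter_powersetCard_le_sub_expect_le hk hc hf ht
  have hlower := card_filter_powersetCard_le_sub_expect_le (f := fun S ↦ -f S) hk hc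
    (fun T x y hT ↦ by linarith [hf T y x hT]) ht
  simp only [expect_neg_distrib, ← neg_sub'] at hlower
  calc (#{S ∈ powersetCard k W | t ≤ |f S - 𝔼 S ∈ powersetCard k W, f S|} : ℝ)
      ≤ #{S ∈ powersetCard k W | t ≤ f S - 𝔼 S ∈ powersetCard k W, f S} +
          #{S ∈ powersetCard k W | t ≤ -(f S - 𝔼 S ∈ powersetCard k W, f S)} := by
        simp only [le_abs, filter_or]
        exact_mod_cast card_union_le _ _
    _ ≤ 2 * Real.exp (-t ^ 2 / (2 * (k * c ^ 2))) * #(powersetCard k W) := by linarith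

end Concentration

section Sampling

variable {V : Type*} [Fintype V] {U : V → V → ℝ} {k : ℕ}

lemma card_filter_le_abs_cutDensity_sub_expect_le (hU : ∀ u v, |U u v| ≤ 1) (hk : 0 < k)
    (hcard : k ≤ Fintype.card V) :
    (#{S ∈ powersetCard k univ | 1 / (k : ℝ) ^ (1 / 4 : ℝ) ≤
        |cutDensity U S S - 𝔼 S ∈ powersetCard k univ, cutDensity U S S|} : ℝ) ≤
      2 * Real.exp (-√k / 8) * #(powersetCard k (univ : Finset V)) := by
  have hk' : (0 : ℝ) < k := Nat.cast_pos.2 hk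
  -- `insert x T` may have fewer than `k` elements, so the exchange bound is only available for the
  -- fixed denominator `k ^ 2`.
  have hdensity {S : Finset V} (hS : S ∈ powersetCard k univ) :
      cutDensity U S S = cutNorm U S S / k ^ 2 := by
    rw [cutDensity, (mem_powersetCard.1 hS).2, sq]
  have hexchange (T : Finset V) (x y : V) (hT : #T < k) :
      cutNorm U (insert x T) (insert x T) / (k : ℝ) ^ 2 -
        cutNorm U (insert y T) (insert y T) / (k : ℝ) ^ 2 ≤ 2 / k := by
    have hT' : (#T : ℝ) + 1 ≤ k := mod_cast hT
    rw [← sub_div, div_le_div_iff₀ (by positivity) hk']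
    nlinarith [cutNorm_insert_sub_le hU x y T]
  have hexponent : -(1 / (k : ℝ) ^ (1 / 4 : ℝ)) ^ 2 / (2 * (k * (2 / k) ^ 2)) = -√k / 8 := by
    have hsq : ((k : ℝ) ^ (1 / 4 : ℝ)) ^ 2 = √k := by
      rw [← Real.rpow_mul_natCast hk'.le, Real.sqrt_eq_rpow]
      norm_num
    rw [div_pow, hsq]
    field_simp
    rw [Real.sq_sqrt hk'.le]
    norm_num
  rw [expect_congr rfl fun S ↦ hdensity, filter_congr fun S hS ↦ by rw [hdensity hS], ← hexponent]
  exact card_filter_powersetCard_le_abs_sub_expect_le hcard (by positivity) hexchange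
    (by positivity)

theorem first_sampling_lemma_general (hU : ∀ u v, |U u v| ≤ 1) (hk : 0 < k)
    (hcard : k ≤ Fintype.card V) :
    (1 - 2 * Real.exp (-√k / 8)) * #(powersetCard k (univ : Finset V)) ≤
      #{S ∈ powersetCard k univ |
        |cutDensity U S S - cutDensity U univ univ| ≤ 10 / (k : ℝ) ^ (1 / 4 : ℝ)} := by
  set μ := 𝔼 S ∈ powersetCard k univ, cutDensity U S S
  set q := (k : ℝ) ^ (1 / 4 : ℝ)
  have hmean : |μ - cutDensity U univ univ| ≤ 9 / q :=
    abs_expect_powersetCard_cutDensity_sub_le hU hk hcard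
  have hfar {S : Finset V} (hS : ¬ |cutDensity U S S - cutDensity U univ univ| ≤ 10 / q) :
      1 / q ≤ |cutDensity U S S - μ| := by
    have htriangle := abs_sub_le (cutDensity U S S) μ (cutDensity U univ univ)
    have hten : 10 / q = 1 / q + 9 / q := by ring
    linarith
  have hbad : (#{S ∈ powersetCard k univ |
      ¬ |cutDensity U S S - cutDensity U univ univ| ≤ 10 / q} : ℝ) ≤
        2 * Real.exp (-√k / 8) * #(powersetCard k (univ : Finset V)) :=
    (Nat.cast_le.2 (card_le_card (monotone_filter_right _ fun S _ ↦ hfar))).trans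
      (card_filter_le_abs_cutDensity_sub_expect_le hU hk hcard)
  have hsplit : (#{S ∈ powersetCard k univ |
      |cutDensity U S S - cutDensity U univ univ| ≤ 10 / q} : ℝ) + #{S ∈ powersetCard k univ |
        ¬ |cutDensity U S S - cutDensity U univ univ| ≤ 10 / q} =
          #(powersetCard k (univ : Finset V)) :=
    mod_cast card_filter_add_card_filter_not _
  linarith

end Sampling

section CutDistance

variable {V : Type} (β β' : V → V → ℝ)

lemma cutDistW_eq_cutDensity [Fintype V] :
    cutDistW β β' = cutDensity (fun u v ↦ β u v - β' u v) univ univ := by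
  simp only [cutDistW, cutDensity, cutNorm, powerset_univ, univ_product_univ,
    sup'_univ_eq_ciSup, card_univ, sq]

lemma cutDistW_subtype_eq_cutDensity (S : Finset V) [Fintype {x // x ∈ S}] :
    cutDistW (fun u v : {x // x ∈ S} ↦ β u v) (fun u v : {x // x ∈ S} ↦ β' u v) =
      cutDensity (fun u v ↦ β u v - β' u v) S S := by
  have hS : (univ : Finset {x // x ∈ S}).map (.subtype (· ∈ S)) = S := by ext; simp
  have hmap := cutDensity_map (fun u v ↦ β u v - β' u v) (.subtype (· ∈ S)) (.subtype (· ∈ S))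
    univ univ
  rw [hS] at hmap
  exact (cutDistW_eq_cutDensity _ _).trans hmap.symm

end CutDistance

/-- First Sampling Lemma: for edge-weighted graphs `β, β'` on a common vertex set of size
at least `k`, a uniformly random `k`-subset `S` satisfies
`|d_□(G[S],H[S]) − d_□(G,H)| ≤ 10/k^{1/4}` with probability at least `1 − 2e^{−√k/8}`. -/
theorem first_sampling_lemma (k : ℕ) (hk : 0 < k) {V : Type} [Fintype V]
    (β β' : V → V → ℝ)
    (hβ : ∀ u v, β u v ∈ Set.Icc (0:ℝ) 1) (hβsymm : ∀ u v, β u v = β v u)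
    (hβ' : ∀ u v, β' u v ∈ Set.Icc (0:ℝ) 1) (hβ'symm : ∀ u v, β' u v = β' v u)
    (hcard : k ≤ Fintype.card V) :
    (1 - 2 * Real.exp (-(Real.sqrt k) / 8)) *
        ((Finset.powersetCard k (Finset.univ : Finset V)).card : ℝ) ≤
      (((Finset.powersetCard k (Finset.univ : Finset V)).filter (fun S : Finset V =>
          |cutDistW (fun u v : {x // x ∈ S} => β u.1 v.1)
              (fun u v : {x // x ∈ S} => β' u.1 v.1) -
            cutDistW β β'| ≤ 10 / (k : ℝ) ^ ((1 : ℝ)/4))).card : ℝ) := by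
  have hU (u v : V) : |β u v - β' u v| ≤ 1 :=
    (abs_sub_le_of_le_of_le (hβ u v).1 (hβ u v).2 (hβ' u v).1 (hβ' u v).2).trans_eq (sub_zero 1)
  simpa only [cutDistW_subtype_eq_cutDensity β β', cutDistW_eq_cutDensity β β'] using
    first_sampling_lemma_general hU hk hcard
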